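/- Let α be a type and let A and B be palindromic lists over α, each of even length. Let n ≥ 1 be such that d(n) is odd, write T(n) = (Λ_1, …, Λ_N), and set k = (d(n)+1)/2. Then the list ⌈Λ_k⌉ ⊕ Λ_{k+1} ⊕ … ⊕ Λ_N ⊕ Λ_1 ⊕ … ⊕ Λ_{k−1} ⊕ ⌊Λ_k⌋ is palindromic. -/

import Mathlib

/-- Stern's diatomic sequence. -/
def stern : ℕ → ℕ
  | 0 => 0
  | 1 => 1
  | n + 2 =>
    if (n + 2) % 2 = 0 then stern ((n + 2) / 2)
    else stern ((n + 2) / 2) + stern ((n + 2) / 2 + 1)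
decreasing_by all_goals omega

/-- OEIS A003602: a(1)=1, a(2n)=a(n), a(2n+1)=n+1. (a(0)=0 as junk value.) -/
def aseq : ℕ → ℕ
  | 0 => 0
  | 1 => 1
  | n + 2 =>
    if (n + 2) % 2 = 0 then aseq ((n + 2) / 2)
    else (n + 2) / 2 + 1
decreasing_by all_goals omega

-- the modified sequence `a*`: zero at powers of two.
open Classical in
noncomputable def aStar (j : ℕ) : ℕ :=
  if ∃ k, j = 2 ^ k then 0 else aseq j

theorem aseq_le (n : ℕ) : aseq n ≤ n := by
  induction n using Nat.strong_induction_on with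
  | _ n ih =>
    match n with
    | 0 => simp [aseq]
    | 1 => simp [aseq]
    | m + 2 =>
      rw [aseq]
      split
      · exact le_trans (ih ((m + 2) / 2) (by omega)) (by omega)
      · omega

theorem aStar_le (j : ℕ) : aStar j ≤ j := by
  unfold aStar
  split
  · omega
  · exact aseq_le j

/-- The Markov-type sequence `S_{A,B}(n)`. -/
noncomputable def mseq {α : Type*} (A B : List α) : ℕ → List α
  | 0 => A
  | 1 => B
  | 2 => A ++ B
  | n + 3 =>
    if (n + 3) % 2 = 0 then
      mseq A B ((n + 3) / 2) ++ mseq A B (aseq ((n + 3) / 2))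
    else
      mseq A B (aStar ((n + 4) / 2 - 1)) ++ mseq A B ((n + 4) / 2)
decreasing_by
  all_goals first
    | omega
    | exact lt_of_le_of_lt (aseq_le _) (by omega)
    | exact lt_of_le_of_lt (aStar_le _) (by omega)

/-- The block decomposition `T(n)` of `S_{A,B}(n)`. -/
noncomputable def blockSeq {α : Type*} (A B : List α) : ℕ → List (List α)
  | 0 => [A]
  | 1 => [B]
  | 2 => [A, B]
  | n + 3 =>
    if (n + 3) % 2 = 0 then
      blockSeq A B ((n + 3) / 2) ++ blockSeq A B (aseq ((n + 3) / 2))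
    else
      blockSeq A B (aStar ((n + 4) / 2 - 1)) ++ blockSeq A B ((n + 4) / 2)
decreasing_by
  all_goals first
    | omega
    | exact lt_of_le_of_lt (aseq_le _) (by omega)
    | exact lt_of_le_of_lt (aStar_le _) (by omega)

/-!
Let `U = T(a*(n))` and `V = T(a(n + 1))`. For `n ≥ 1` the list `T(n + 1)` factors as `P ++ Q` with
`|U| = |Q| = d(n)` and `|P| = |V| = d(n + 1)`, where `P`, `Q`, `U ++ P` and `Q ++ V` are all
palindromes. The recursion replaces `(U, P, Q, V)` by `(U, U ++ P, Q, P ++ Q)` for `T(2n + 1)` and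
by `(P ++ Q, P, Q ++ V, V)` for `T(2n + 2)`, and both moves preserve these properties.

So when `d(n)` is odd, `Λ_k` is the central block of the palindromic prefix `P` of `T(n)`, and
rotating `T(n)` to start at `Λ_k` leaves a palindrome of blocks after it. Cutting `Λ_k` into two
mirror-image halves and moving the first half to the end then gives a palindrome.
-/

open List

section Palindromes

variable {β : Type*}

theorem palindrome_append_append_reverse {l : List β} (hl : l.Palindrome) (s : List β) :
    (s ++ l ++ s.reverse).Palindrome :=
  .of_reverse_eq <| by simp [hl.reverse_eq]

theorem palindrome_sandwich {P Q : List β} (hP : P.Palindrome) (hQ : Q.Palindrome) :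
    (P ++ Q ++ P).Palindrome := by
  simpa only [hP.reverse_eq] using palindrome_append_append_reverse hQ P

theorem palindrome_prepend_prefix {U P : List β} (hP : P.Palindrome)
    (hUP : (U ++ P).Palindrome) : (U ++ (U ++ P)).Palindrome := by
  have hcomm : U ++ P = P ++ U.reverse := by
    rw [← hUP.reverse_eq, reverse_append, hP.reverse_eq]
  rw [hcomm, ← append_assoc]
  exact palindrome_append_append_reverse hP U

theorem palindrome_append_suffix {Q V : List β} (hQ : Q.Palindrome)
    (hQV : (Q ++ V).Palindrome) : (Q ++ V ++ V).Palindrome := by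
  have hcomm : Q ++ V = V.reverse ++ Q := by
    rw [← hQV.reverse_eq, reverse_append, hQ.reverse_eq]
  rw [hcomm]
  simpa only [reverse_reverse] using palindrome_append_append_reverse hQ V.reverse

theorem palindrome_flatten {L : List (List β)} (hL : L.Palindrome)
    (hmem : ∀ Λ ∈ L, Λ.Palindrome) : L.flatten.Palindrome := by
  have hmap : L.map reverse = L :=
    (map_congr_left fun Λ hΛ ↦ (hmem Λ hΛ).reverse_eq).trans L.map_id'
  exact .of_reverse_eq <| by rw [reverse_flatten, hmap, hL.reverse_eq]

theorem palindrome_drop_half_append_append_take_half {c M : List β} (hc : c.Palindrome)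
    (hlen : Even c.length) (hM : M.Palindrome) :
    (c.drop (c.length / 2) ++ M ++ c.take (c.length / 2)).Palindrome := by
  have hhalves : (c.drop (c.length / 2)).reverse = c.take (c.length / 2) := by
    rw [reverse_drop, hc.reverse_eq]
    congr 1
    grind
  simpa only [hhalves] using palindrome_append_append_reverse hM (c.drop (c.length / 2))

theorem exists_eq_append_cons_reverse_of_palindrome {P : List β} (hP : P.Palindrome) {m : ℕ}
    (hlen : P.length = 2 * m + 1) : ∃ X c, X.length = m ∧ P = X ++ c :: X.reverse := by
  have hdrop : P.drop (m + 1) = (P.take m).reverse := by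
    rw [reverse_take, hP.reverse_eq]
    congr 1
    omega
  refine ⟨P.take m, P[m], by simp; omega, ?_⟩
  rw [← hdrop, ← drop_eq_getElem_cons, take_append_drop]

theorem exists_rotate_append_eq_cons_palindrome {P Q : List β} (hP : P.Palindrome)
    (hQ : Q.Palindrome) {m : ℕ} (hlen : P.length = 2 * m + 1) :
    ∃ c W, (P ++ Q).rotate m = c :: W ∧ W.Palindrome := by
  obtain ⟨X, c, rfl, rfl⟩ := exists_eq_append_cons_reverse_of_palindrome hP hlen
  refine ⟨c, X.reverse ++ Q ++ X, ?_, ?_⟩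
  · rw [append_assoc, rotate_append_length_eq]
    simp
  · simpa only [reverse_reverse] using palindrome_append_append_reverse hQ X.reverse

end Palindromes

/-- A palindromic factorization `P ++ Q` of a word, together with the words `U` and `V` that the
recursion for `T` can attach on its left and on its right. The lengths `p` and `q` are consecutive
Stern numbers when the word is some `T(n + 1)`. -/
structure PalindromicSplit {β : Type*} (p q : ℕ) (U P Q V : List β) : Prop where
  length_leftExt : U.length = p
  length_left : P.length = q
  length_right : Q.length = p
  length_rightExt : V.length = q
  palindrome_left : P.Palindrome
  palindrome_right : Q.Palindrome
  palindrome_leftExt_append : (U ++ P).Palindrome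
  palindrome_append_rightExt : (Q ++ V).Palindrome

namespace PalindromicSplit

variable {β : Type*} {p q : ℕ} {U P Q V : List β}

theorem extend_left (h : PalindromicSplit p q U P Q V) :
    PalindromicSplit p (p + q) U (U ++ P) Q (P ++ Q) where
  length_leftExt := h.length_leftExt
  length_left := by rw [length_append, h.length_leftExt, h.length_left]
  length_right := h.length_right
  length_rightExt := by rw [length_append, h.length_left, h.length_right, add_comm]
  palindrome_left := h.palindrome_leftExt_append
  palindrome_right := h.palindrome_right
  palindrome_leftExt_append :=
    palindrome_prepend_prefix h.palindrome_left h.palindrome_leftExt_append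
  palindrome_append_rightExt := by
    simpa only [append_assoc] using
      palindrome_sandwich h.palindrome_right h.palindrome_left

theorem extend_right (h : PalindromicSplit p q U P Q V) :
    PalindromicSplit (p + q) q (P ++ Q) P (Q ++ V) V where
  length_leftExt := by rw [length_append, h.length_left, h.length_right, add_comm]
  length_left := h.length_left
  length_right := by rw [length_append, h.length_right, h.length_rightExt]
  length_rightExt := h.length_rightExt
  palindrome_left := h.palindrome_left
  palindrome_right := h.palindrome_append_rightExt
  palindrome_leftExt_append := palindrome_sandwich h.palindrome_left h.palindrome_right
  palindrome_append_rightExt :=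
    palindrome_append_suffix h.palindrome_right h.palindrome_append_rightExt

end PalindromicSplit

section Recurrences

theorem stern_two_mul (n : ℕ) : stern (2 * n) = stern n := by
  cases n with
  | zero => rfl
  | succ n => rw [mul_add_one, stern, if_pos (by omega)]; congr 1; omega

theorem stern_two_mul_add_one (n : ℕ) : stern (2 * n + 1) = stern n + stern (n + 1) := by
  cases n with
  | zero => simp [stern]
  | succ n =>
    rw [mul_add_one, add_right_comm, stern, if_neg (by omega)]
    congr 2 <;> omega

theorem aseq_two_mul (n : ℕ) : aseq (2 * n) = aseq n := by
  cases n with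
  | zero => rfl
  | succ n => rw [mul_add_one, aseq, if_pos (by omega)]; congr 1; omega

theorem aseq_two_mul_add_one (n : ℕ) : aseq (2 * n + 1) = n + 1 := by
  cases n with
  | zero => simp [aseq]
  | succ n => rw [mul_add_one, add_right_comm, aseq, if_neg (by omega)]; omega

theorem exists_two_mul_eq_two_pow_iff {n : ℕ} : (∃ k, 2 * n = 2 ^ k) ↔ ∃ k, n = 2 ^ k := by
  constructor
  · rintro ⟨_ | k, hk⟩
    · omega
    · exact ⟨k, by rw [pow_succ] at hk; omega⟩
  · rintro ⟨k, rfl⟩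
    exact ⟨k + 1, (pow_succ' 2 k).symm⟩

theorem aStar_one : aStar 1 = 0 :=
  if_pos ⟨0, rfl⟩

theorem aStar_two_mul (n : ℕ) : aStar (2 * n) = aStar n := by
  classical
  rw [aStar, aStar, aseq_two_mul]
  exact if_congr exists_two_mul_eq_two_pow_iff rfl rfl

theorem aStar_two_mul_add_one {n : ℕ} (hn : 1 ≤ n) : aStar (2 * n + 1) = n + 1 := by
  have hpow : ¬∃ k, 2 * n + 1 = 2 ^ k := by
    rintro ⟨_ | k, hk⟩
    · omega
    · rw [pow_succ] at hk; omega
  rw [aStar, if_neg hpow, aseq_two_mul_add_one]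

variable {α : Type*} (A B : List α)

theorem blockSeq_two_mul {n : ℕ} (hn : 2 ≤ n) :
    blockSeq A B (2 * n) = blockSeq A B n ++ blockSeq A B (aseq n) := by
  obtain ⟨m, rfl⟩ := Nat.exists_eq_add_of_le' hn
  rw [show 2 * (m + 2) = 2 * m + 1 + 3 by ring, blockSeq, if_pos (by omega),
    show (2 * m + 1 + 3) / 2 = m + 2 by omega]

theorem blockSeq_two_mul_add_one {n : ℕ} (hn : 1 ≤ n) :
    blockSeq A B (2 * n + 1) = blockSeq A B (aStar n) ++ blockSeq A B (n + 1) := by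
  obtain ⟨m, rfl⟩ := Nat.exists_eq_add_of_le' hn
  rw [show 2 * (m + 1) + 1 = 2 * m + 3 by ring, blockSeq, if_neg (by omega),
    show (2 * m + 4) / 2 = m + 1 + 1 by omega, Nat.add_sub_cancel]

end Recurrences

section Blocks

variable {α : Type*} {A B : List α}

theorem eq_or_eq_of_mem_blockSeq {n : ℕ} {Λ : List α} (hΛ : Λ ∈ blockSeq A B n) :
    Λ = A ∨ Λ = B := by
  fun_induction blockSeq A B n <;> grind

variable (A B) in
theorem exists_palindromicSplit_blockSeq_succ {n : ℕ} (hn : 1 ≤ n) :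
    ∃ P Q, blockSeq A B (n + 1) = P ++ Q ∧
      PalindromicSplit (stern n) (stern (n + 1)) (blockSeq A B (aStar n)) P Q
        (blockSeq A B (aseq (n + 1))) := by
  induction n using Nat.strong_induction_on with
  | _ n ih =>
    obtain rfl | hn2 : n = 1 ∨ 2 ≤ n := by omega
    · refine ⟨[A], [B], by simp [blockSeq], ?_⟩
      constructor <;> simp [blockSeq, aStar_one, stern, aseq, Palindrome.iff_reverse_eq]
    obtain ⟨i, rfl | rfl⟩ := Nat.even_or_odd' n
    · have hi : 1 ≤ i := by omega
      obtain ⟨P, Q, hT, hsplit⟩ := ih i (by omega) hi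
      refine ⟨blockSeq A B (aStar i) ++ P, Q, ?_, ?_⟩
      · rw [blockSeq_two_mul_add_one A B hi, hT, append_assoc]
      · rw [stern_two_mul, stern_two_mul_add_one, aStar_two_mul, aseq_two_mul_add_one, hT]
        exact hsplit.extend_left
    · have hi : 1 ≤ i := by omega
      obtain ⟨P, Q, hT, hsplit⟩ := ih i (by omega) hi
      rw [show 2 * i + 1 + 1 = 2 * (i + 1) by ring]
      refine ⟨P, Q ++ blockSeq A B (aseq (i + 1)), ?_, ?_⟩
      · rw [blockSeq_two_mul A B (by omega), hT, append_assoc]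
      · rw [stern_two_mul, stern_two_mul_add_one, aStar_two_mul_add_one hi, aseq_two_mul, hT]
        exact hsplit.extend_right

variable (A B) in
theorem exists_palindromes_append_eq_blockSeq {n : ℕ} (hn : 1 ≤ n) :
    ∃ P Q, blockSeq A B n = P ++ Q ∧ P.Palindrome ∧ Q.Palindrome ∧ P.length = stern n := by
  obtain rfl | hn2 : n = 1 ∨ 2 ≤ n := by omega
  · exact ⟨[B], [], by simp [blockSeq], .singleton B, .nil, by simp [stern]⟩
  · obtain ⟨i, rfl⟩ := Nat.exists_eq_add_of_le' hn
    obtain ⟨P, Q, hT, hsplit⟩ := exists_palindromicSplit_blockSeq_succ A B (n := i) (by omega)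
    exact ⟨P, Q, hT, hsplit.palindrome_left, hsplit.palindrome_right, hsplit.length_left⟩

end Blocks

/-- if `A`, `B` are palindromic of even length and `d(n)` is odd, with
`k = (d(n)+1)/2`, the list `⌈Λ_k⌉ ⊕ Λ_{k+1} ⊕ … ⊕ Λ_N ⊕ Λ_1 ⊕ … ⊕ Λ_{k−1} ⊕ ⌊Λ_k⌋`
is palindromic.  Here `R = (T(n)).rotate (k-1)` has head `Λ_k` and tail
`Λ_{k+1}, …, Λ_N, Λ_1, …, Λ_{k−1}`; `⌊Λ⌋` is the first `⌊m/2⌋` entries and `⌈Λ⌉`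
the last `⌈m/2⌉` entries of `Λ`. -/
theorem stmt1 {α : Type*} (A B : List α) (hA : A.reverse = A) (hB : B.reverse = B)
    (hAe : Even A.length) (hBe : Even B.length)
    (n : ℕ) (hn : 1 ≤ n) (hd : Odd (stern n)) :
    ((((blockSeq A B n).rotate ((stern n + 1) / 2 - 1)).headD []).drop
          ((((blockSeq A B n).rotate ((stern n + 1) / 2 - 1)).headD []).length / 2) ++
        (((blockSeq A B n).rotate ((stern n + 1) / 2 - 1)).tail).flatten ++
        (((blockSeq A B n).rotate ((stern n + 1) / 2 - 1)).headD []).take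
          ((((blockSeq A B n).rotate ((stern n + 1) / 2 - 1)).headD []).length / 2)).reverse =
      (((blockSeq A B n).rotate ((stern n + 1) / 2 - 1)).headD []).drop
          ((((blockSeq A B n).rotate ((stern n + 1) / 2 - 1)).headD []).length / 2) ++
        (((blockSeq A B n).rotate ((stern n + 1) / 2 - 1)).tail).flatten ++
        (((blockSeq A B n).rotate ((stern n + 1) / 2 - 1)).headD []).take
          ((((blockSeq A B n).rotate ((stern n + 1) / 2 - 1)).headD []).length / 2) := by
  have hblock : ∀ Λ ∈ blockSeq A B n, Λ.Palindrome ∧ Even Λ.length := by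
    intro Λ hΛ
    obtain rfl | rfl := eq_or_eq_of_mem_blockSeq hΛ
    exacts [⟨.of_reverse_eq hA, hAe⟩, ⟨.of_reverse_eq hB, hBe⟩]
  obtain ⟨P, Q, hT, hP, hQ, hlen⟩ := exists_palindromes_append_eq_blockSeq A B hn
  obtain ⟨m, hm⟩ := hd
  have hk : (stern n + 1) / 2 - 1 = m := by omega
  obtain ⟨c, W, hrot, hW⟩ := exists_rotate_append_eq_cons_palindrome hP hQ (hlen.trans hm)
  rw [← hT] at hrot
  have hmem : ∀ Λ ∈ c :: W, Λ.Palindrome ∧ Even Λ.length :=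
    fun Λ hΛ ↦ hblock Λ <| mem_rotate.mp <| hrot ▸ hΛ
  obtain ⟨⟨hc, hce⟩, hWmem⟩ := forall_mem_cons.mp hmem
  have hflat : W.flatten.Palindrome := palindrome_flatten hW fun Λ hΛ ↦ (hWmem Λ hΛ).1
  rw [hk, hrot]
  exact (palindrome_drop_half_append_append_take_half hc hce hflat).reverse_eq
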